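/- arXiv:1004.0613 — 3 statements merged into one kernel-verified Lean document; each statement's English description precedes it below -/
import Mathlib

section
/- Let Q be a quiver without oriented cycles whose underlying graph is a cycle on N ≥ 2 vertices labeled 0,…,N−1, with edges joining i and i+1 (indices modulo N; for N = 2 there are two parallel edges). Then for every vertex i of Q the frieze sequence (X^i_j)_{j≥0} satisfies a linear recurrence over the field ℚ(x_0,…,x_{N−1}). -/
open Finset

open scoped MatrixGroups

/-- A bi-infinite sequence with prescribed consecutive quotients exists in any group. -/
@[to_additive]
theorem exists_int_seq_mul {G : Type*} [Group G] (m : ℤ → G) :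
    ∃ S : ℤ → G, S 0 = 1 ∧ ∀ i, S (i + 1) = S i * m i := by
  let P : ℕ → G := fun k => Nat.rec 1 (fun l s => s * m l) k
  let Q : ℕ → G := fun k => Nat.rec 1 (fun l s => s * (m (-((l : ℤ) + 1)))⁻¹) k
  have hP : ∀ k, P (k + 1) = P k * m k := fun _ => rfl
  have hQ : ∀ k, Q (k + 1) = Q k * (m (-((k : ℤ) + 1)))⁻¹ := fun _ => rfl
  refine ⟨fun i => if 0 ≤ i then P i.toNat else Q (-i).toNat, by simp [P], fun i => ?_⟩
  dsimp only
  obtain h | rfl | h : 0 ≤ i ∨ i = -1 ∨ i < -1 := by omega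
  · lift i to ℕ using h
    rw [if_pos (by omega), if_pos (by omega), Int.toNat_natCast, Int.toNat_natCast_add_one, hP]
  · have := hQ 0
    simp_all [P, Q]
  · obtain ⟨k, rfl⟩ : ∃ k : ℕ, i = -((k : ℤ) + 1) := ⟨(-i - 1).toNat, by omega⟩
    rw [if_neg (by omega), if_neg (by omega)]
    have h1 : (-(-((k : ℤ) + 1) + 1)).toNat = k := by omega
    have h2 : (-(-((k : ℤ) + 1))).toNat = k + 1 := by omega
    rw [h1, h2, hQ, inv_mul_cancel_right]

@[to_additive]
theorem int_seq_mul_add_period {G : Type*} [Group G] {m S : ℤ → G} (h0 : S 0 = 1)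
    (hS : ∀ i, S (i + 1) = S i * m i) {T : ℤ} (hT : ∀ i, m (i + T) = m i) (i : ℤ) :
    S (i + T) = S T * S i := by
  induction i using Int.induction_on with
  | zero => simp [h0]
  | succ i ih => rw [add_right_comm, hS, hS, ih, hT, mul_assoc]
  | pred i ih =>
    have h1 := hS (-i - 1)
    have h2 := hS (-i - 1 + T)
    rw [hT, show (-i - 1 + T + 1 : ℤ) = -i + T by ring, ih] at h2
    rw [sub_add_cancel] at h1
    rw [h1, ← mul_assoc] at h2
    exact (mul_right_cancel h2).symm

/-- An integer sequence with steps `0` or `1` and a positive quasi-period crosses every level. -/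
theorem exists_crossing {R : ℤ → ℤ} (hstep : ∀ i, R (i + 1) = R i ∨ R (i + 1) = R i + 1)
    {T p : ℤ} (hp : 0 < p) (hT : ∀ k i, R (i + k * T) = R i + k * p) (r : ℤ) :
    ∃ i, R i = r ∧ R (i + 1) = r + 1 := by
  have hmono : Monotone R := monotone_int_of_le_succ fun i => by
    rcases hstep i with h | h <;> omega
  have hpk : ∀ k : ℤ, 0 ≤ k → k ≤ k * p := fun k hk => by nlinarith
  obtain ⟨b, hb⟩ : ∃ b, r < R b :=
    ⟨0 + (|r - R 0| + 1) * T, by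
      rw [hT]; have := hpk (|r - R 0| + 1) (by positivity); have := le_abs_self (r - R 0); omega⟩
  obtain ⟨a, ha⟩ : ∃ a, R a ≤ r :=
    ⟨0 + (-|r - R 0|) * T, by
      rw [hT]; have := hpk (|r - R 0|) (by positivity); have := neg_abs_le (r - R 0)
      rw [neg_mul]; omega⟩
  obtain ⟨i, hi, hmax⟩ := Int.exists_greatest_of_bdd (P := fun i => R i ≤ r)
    ⟨b, fun z hz => by by_contra! h; exact absurd (hmono h.le) (by omega)⟩ ⟨a, ha⟩
  have h1 : r < R (i + 1) := by
    by_contra! h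
    have := hmax _ h
    omega
  rcases hstep i with h | h <;> exact ⟨i, by omega, by omega⟩

/-- A function that is constant along the flat steps of `R` only depends on the value of `R`. -/
theorem eq_of_level_eq {α : Type*} {R : ℤ → ℤ}
    (hstep : ∀ i, R (i + 1) = R i ∨ R (i + 1) = R i + 1) {U : ℤ → α}
    (hU : ∀ i, R (i + 1) = R i → U (i + 1) = U i) {a b : ℤ} (h : R a = R b) : U a = U b := by
  have hmono : Monotone R := monotone_int_of_le_succ fun i => by
    rcases hstep i with h | h <;> omega
  have key : ∀ (k : ℕ) (a : ℤ), R (a + k) = R a → U (a + k) = U a := by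
    intro k
    induction k with
    | zero => simp
    | succ k ih =>
      intro a h
      have h1 : R a ≤ R (a + k) := hmono (by omega)
      have h2 : R (a + k) ≤ R (a + k + 1) := hmono (by omega)
      push_cast at h ⊢
      rw [← add_assoc] at h ⊢
      rw [hU _ (by omega), ih _ (by omega)]
  rcases le_total a b with hab | hab
  · obtain ⟨k, rfl⟩ := Int.le.dest hab
    exact (key k a h.symm).symm
  · obtain ⟨k, rfl⟩ := Int.le.dest hab
    exact key k b h

/-- The symplectic form on the plane. -/
def planeForm {K : Type*} [CommRing K] (u w : Fin 2 → K) : K := u 0 * w 1 - u 1 * w 0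

open scoped Matrix in
/-- The Cayley–Hamilton identity paired with a vector, for a pair of commuting matrices. -/
theorem planeForm_cayley_hamilton {K : Type*} [CommRing K] (A B : SL(2, K)) (hAB : A * B = B * A)
    (u w : Fin 2 → K) :
    planeForm ((A * A).1 *ᵥ u) ((B * B).1 *ᵥ w) =
      (B⁻¹ * A).1.trace * planeForm (A.1 *ᵥ u) (B.1 *ᵥ w) - planeForm u w := by
  have inv : ∀ (C : SL(2, K)) (u w : Fin 2 → K),
      planeForm (C.1 *ᵥ u) (C.1 *ᵥ w) = planeForm u w := by
    intro C u w
    have hC := C.2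
    rw [Matrix.det_fin_two] at hC
    simp only [planeForm, Matrix.mulVec, dotProduct, Fin.sum_univ_two]
    linear_combination (u 0 * w 1 - u 1 * w 0) * hC
  obtain ⟨H, rfl⟩ : ∃ H, A = B * H := ⟨B⁻¹ * A, by group⟩
  have hBH : H * B = B * H := mul_left_cancel ((mul_assoc B H B).symm.trans hAB)
  have e : B * H * (B * H) = B * B * (H * H) := by
    rw [mul_assoc, ← mul_assoc H B H, hBH]; simp only [mul_assoc]
  rw [e, inv_mul_cancel_left, Matrix.SpecialLinearGroup.coe_mul (B * B),
    Matrix.SpecialLinearGroup.coe_mul B H, ← Matrix.mulVec_mulVec, ← Matrix.mulVec_mulVec,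
    inv, inv]
  have hH := H.2
  rw [Matrix.det_fin_two] at hH
  simp only [planeForm, Matrix.mulVec, dotProduct, Fin.sum_univ_two, Matrix.trace_fin_two,
    Matrix.SpecialLinearGroup.coe_mul, Matrix.mul_apply]
  linear_combination (u 1 * w 0 - u 0 * w 1) * hH

/-- The number of `b`s seen along a periodic binary word is a quasi-periodic function. -/
theorem exists_count {N : ℤ} (hN : 0 < N) {d : ℤ → Bool} (hd : Function.Periodic d N) {b : Bool}
    (hb : ∃ i, d i = b) :
    ∃ (R : ℤ → ℤ) (p : ℤ), (∀ i, R (i + 1) = R i + if d i = b then 1 else 0) ∧ 0 < p ∧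
      ∀ k i, R (i + k * N) = R i + k * p := by
  obtain ⟨a, ha⟩ := hb
  obtain ⟨R, h0, hR⟩ := exists_int_seq_add (fun i => if d i = b then (1 : ℤ) else 0)
  have hmono : Monotone R := monotone_int_of_le_succ fun i => by
    rw [hR]; split_ifs <;> simp
  have hT : ∀ i, R (i + N) = R N + R i :=
    int_seq_add_add_period h0 hR (fun i => by simp only [hd i])
  refine ⟨R, R N, hR, ?_, fun k i => ?_⟩
  · have h1 := hR a
    rw [if_pos ha] at h1
    have h2 : R (a + 1) ≤ R (a + N) := hmono (by omega)
    rw [hT] at h2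
    omega
  · induction k using Int.induction_on generalizing i with
    | zero => simp
    | succ k ih => rw [add_mul, one_mul, ← add_assoc, hT, ih]; ring
    | pred k ih =>
      have := hT (i + (-k - 1) * N)
      rw [show i + (-k - 1) * N + N = i + -k * N by ring, ih] at this
      linarith

/-- Transport along one edge of the frontier of an `SL₂`-tiling. -/
def frontierStep {K : Type*} [Field K] (b : Bool) (x y : Kˣ) : SL(2, K) :=
  if b then ⟨!![(y / x : K), 0; 1, (x / y : K)], by simp [Matrix.det_fin_two]⟩
  else ⟨!![1, (1 / (x * y) : K); 0, 1], by simp [Matrix.det_fin_two]⟩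

open scoped Matrix in
/-- The `SL₂`-tiling with a given periodic frontier, as a family of pairings `planeForm (u r) (w c)`
in which `u` and `w` are quasi-periodic. -/
theorem exists_tiling {K : Type*} [Field K] {N : ℤ} (hN : 0 < N) {d : ℤ → Bool}
    (hd : Function.Periodic d N) (hdt : ∃ i, d i = true) (hdf : ∃ i, d i = false)
    {x : ℤ → Kˣ} (hx : Function.Periodic x N) :
    ∃ (R D : ℤ → ℤ) (p q : ℤ) (u w : ℤ → Fin 2 → K) (S : ℤ → SL(2, K)),
      (∀ i, R (i + 1) = R i + if d i = true then 1 else 0) ∧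
      (∀ i, D (i + 1) = D i + if d i = false then 1 else 0) ∧ 0 < p ∧ 0 < q ∧
      (∀ i, planeForm (u (R i)) (w (D i)) = x i) ∧
      (∀ r, planeForm (u r) (u (r + 1)) = 1) ∧
      (∀ r, planeForm (w (r + 1)) (w r) = 1) ∧
      (∀ k l, S (k + l) = S k * S l) ∧
      (∀ k r, u (r + k * p) = (S k).1 *ᵥ u r) ∧
      (∀ k r, w (r + k * q) = (S k).1 *ᵥ w r) := by
  obtain ⟨R, p, hR, hp, hRp⟩ := exists_count hN hd hdt
  obtain ⟨D, q, hD, hq, hDq⟩ := exists_count hN hd hdf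
  have hRs : ∀ i, R (i + 1) = R i ∨ R (i + 1) = R i + 1 := fun i => by
    rw [hR]; split_ifs <;> simp
  have hDs : ∀ i, D (i + 1) = D i ∨ D (i + 1) = D i + 1 := fun i => by
    rw [hD]; split_ifs <;> simp
  obtain ⟨S, hS0, hS⟩ := exists_int_seq_mul (fun i => frontierStep (d i) (x i) (x (i + 1)))
  have hdk : ∀ k i : ℤ, d (i + k * N) = d i := fun k i => by simpa using hd.int_mul k i
  have hxk : ∀ k i : ℤ, x (i + k * N) = x i := fun k i => by simpa using hx.int_mul k i
  have hSk : ∀ k i, S (i + k * N) = S (k * N) * S i := fun k =>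
    int_seq_mul_add_period hS0 hS fun i => by
      simp only [hdk, hxk, show i + k * N + 1 = i + 1 + k * N by ring]
  choose σ hσ hσ' using exists_crossing hRs hp hRp
  choose ρ hρ hρ' using exists_crossing hDs hq hDq
  let U : ℤ → Fin 2 → K := fun i => (S i).1 *ᵥ ![1, 0]
  let W : ℤ → Fin 2 → K := fun i => (S i).1 *ᵥ ![0, (x i : K)]
  have det : ∀ i, (S i).1 0 0 * (S i).1 1 1 - (S i).1 0 1 * (S i).1 1 0 = 1 := fun i => by
    rw [← Matrix.det_fin_two]; exact (S i).2
  have hSc : ∀ i, (S (i + 1)).1 = (S i).1 * (frontierStep (d i) (x i) (x (i + 1))).1 :=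
    fun i => by rw [hS]; rfl
  have step_true : ∀ i, d i = true → W (i + 1) = W i ∧ planeForm (U i) (U (i + 1)) = 1 := by
    intro i hi
    have h := det i
    constructor
    · ext t
      fin_cases t <;>
        simp [W, hSc, frontierStep, hi, Matrix.mul_apply, mul_assoc]
    · simp [U, planeForm, hSc, frontierStep, hi, Matrix.mul_apply]
      linear_combination h
  have step_false : ∀ i, d i = false → U (i + 1) = U i ∧ planeForm (W (i + 1)) (W i) = 1 := by
    intro i hi
    have h := det i
    have h1 := (x i).ne_zero
    have h2 := (x (i + 1)).ne_zero
    constructor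
    · ext t
      fin_cases t <;>
        simp [U, hSc, frontierStep, hi, Matrix.mul_apply]
    · simp [W, planeForm, hSc, frontierStep, hi, Matrix.mul_apply]
      field_simp
      linear_combination h
  have hU : ∀ {a b}, R a = R b → U a = U b := eq_of_level_eq hRs fun i hi =>
    (step_false i (by rw [hR] at hi; simpa using hi)).1
  have hW : ∀ {a b}, D a = D b → W a = W b := eq_of_level_eq hDs fun i hi =>
    (step_true i (by rw [hD] at hi; simpa using hi)).1
  have hσd : ∀ r, d (σ r) = true := fun r => by
    have := hσ' r
    rw [hR, hσ] at this
    simpa using this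
  have hρd : ∀ r, d (ρ r) = false := fun r => by
    have := hρ' r
    rw [hD, hρ] at this
    simpa using this
  refine ⟨R, D, p, q, U ∘ σ, W ∘ ρ, fun k => S (k * N), hR, hD, hp, hq, fun i => ?_,
    fun r => ?_, fun r => ?_, fun k l => ?_, fun k r => ?_, fun k r => ?_⟩
  · simp only [Function.comp_apply]
    rw [hU (hσ (R i)), hW (hρ (D i))]
    simp [U, W, planeForm]
    linear_combination (x i : K) * det i
  · simp only [Function.comp_apply]
    rw [hU (a := σ (r + 1)) (b := σ r + 1) (by rw [hσ, hσ'])]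
    exact (step_true _ (hσd r)).2
  · simp only [Function.comp_apply]
    rw [hW (a := ρ (r + 1)) (b := ρ r + 1) (by rw [hρ, hρ'])]
    exact (step_false _ (hρd r)).2
  · dsimp only
    rw [add_comm k l, add_mul, hSk]
  · simp only [Function.comp_apply]
    rw [hU (a := σ (r + k * p)) (b := σ r + k * N) (by rw [hσ, hRp, hσ])]
    simp only [U]
    rw [hSk, Matrix.mulVec_mulVec, Matrix.SpecialLinearGroup.coe_mul]
  · simp only [Function.comp_apply]
    rw [hW (a := ρ (r + k * q)) (b := ρ r + k * N) (by rw [hρ, hDq, hρ])]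
    simp only [W]
    rw [hSk, hxk, Matrix.mulVec_mulVec, Matrix.SpecialLinearGroup.coe_mul]

/-- The frieze of a periodic acyclic orientation of the bi-infinite line satisfies a linear
recurrence of order two along an arithmetic progression of positions. -/
theorem exists_frieze_recurrence {K : Type*} [Field K] {N : ℤ} (hN : 0 < N) {d : ℤ → Bool}
    (hd : Function.Periodic d N) {f : ℤ → ℕ} (hft : ∀ i, d i = true → f i < f (i + 1))
    (hff : ∀ i, d i = false → f (i + 1) < f i)
    (hdt : ∃ i, d i = true) (hdf : ∃ i, d i = false) {X : ℤ → ℕ → K}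
    (hX : ∀ i, X (i + N) 0 = X i 0) (hne : ∀ i j, X i j ≠ 0)
    (hrec : ∀ i j, X i (j + 1) * X i j =
      1 + X (i - 1) (j + if d (i - 1) then 1 else 0) * X (i + 1) (j + if d i then 0 else 1)) :
    ∃ (s : ℕ) (τ : K), 0 < s ∧ ∀ i j, X i (j + 2 * s) = τ * X i (j + s) - X i j := by
  obtain ⟨R, D, p, q, u, w, S, hR, hD, hp, hq, hx, hu, hw, hS, huS, hwS⟩ :=
    exists_tiling hN hd hdt hdf (x := fun i => Units.mk0 (X i 0) (hne i 0))
      (fun i => by simp [hX])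
  have tiling : ∀ j i, X i j = planeForm (u (R i + j)) (w (D i - j)) := by
    intro j
    induction j with
    | zero => intro i; simp [hx]
    | succ j ih =>
      intro i
      induction h : f i using Nat.strong_induction_on generalizing i with
      | _ k ih' =>
        have h1 : X (i - 1) (j + if d (i - 1) then 1 else 0) =
            planeForm (u (R i + j)) (w (D i - j - 1)) := by
          have hR' := hR (i - 1)
          have hD' := hD (i - 1)
          rw [sub_add_cancel] at hR' hD'
          cases hdi : d (i - 1) with
          | false =>
            simp only [hdi, Bool.false_eq_true, if_false, if_true, add_zero] at hR' hD' ⊢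
            rw [ih, hR', hD']
            congr 2
            ring
          | true =>
            have := hft _ hdi
            rw [sub_add_cancel, h] at this
            simp only [hdi, Bool.true_eq_false, if_false, if_true, add_zero] at hR' hD' ⊢
            rw [ih' _ this _ rfl, hR', hD']
            push_cast
            congr 2 <;> ring
        have h2 : X (i + 1) (j + if d i then 0 else 1) =
            planeForm (u (R i + j + 1)) (w (D i - j)) := by
          have hR' := hR i
          have hD' := hD i
          cases hdi : d i with
          | true =>
            simp only [hdi, Bool.true_eq_false, if_false, if_true, add_zero] at hR' hD' ⊢
            rw [ih, hR', hD']
            congr 2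
            ring
          | false =>
            have := hff _ hdi
            rw [h] at this
            simp only [hdi, Bool.false_eq_true, if_false, if_true, add_zero] at hR' hD' ⊢
            rw [ih' _ this _ rfl, hR', hD']
            push_cast
            congr 2 <;> ring
        have h3 := hrec i j
        apply mul_right_cancel₀ (hne i j)
        rw [h3, h1, h2, ih i]
        have h4 := hu (R i + j)
        have h5 := hw (D i - j - 1)
        rw [sub_add_cancel] at h5
        push_cast
        rw [← add_assoc, ← sub_sub]
        generalize u (R i + j + 1) = u' at *
        generalize u (R i + j) = u₀ at *
        generalize w (D i - j - 1) = w' at *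
        generalize w (D i - j) = w₀ at *
        simp only [planeForm] at h4 h5 ⊢
        linear_combination (-1 : K) * h4 - (u₀ 0 * u' 1 - u₀ 1 * u' 0) * h5
  lift p to ℕ using hp.le
  lift q to ℕ using hq.le
  refine ⟨p * q, ((S (-p))⁻¹ * S q).1.trace, Nat.mul_pos (by omega) (by omega), fun i j => ?_⟩
  rw [tiling, tiling, tiling]
  have e1 : R i + ((j + 2 * (p * q) : ℕ) : ℤ) = R i + j + (q + q : ℤ) * p := by push_cast; ring
  have e2 : D i - ((j + 2 * (p * q) : ℕ) : ℤ) = D i - j + (-p + -p : ℤ) * q := by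
    push_cast; ring
  have e3 : R i + ((j + p * q : ℕ) : ℤ) = R i + j + q * p := by push_cast; ring
  have e4 : D i - ((j + p * q : ℕ) : ℤ) = D i - j + -p * q := by push_cast; ring
  rw [e1, e2, e3, e4, huS, huS, hwS, hwS, hS, hS]
  exact planeForm_cayley_hamilton _ _ (by rw [← hS, ← hS, add_comm]) _ _

/-- Quotients of polynomials taking positive values at the point `(1, …, 1)`. -/
def IsPosAtOne {σ : Type*} (a : FractionRing (MvPolynomial σ ℚ)) : Prop :=
  ∃ P Q : MvPolynomial σ ℚ, 0 < P.eval (fun _ => 1) ∧ 0 < Q.eval (fun _ => 1) ∧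
    a * algebraMap _ _ Q = algebraMap _ _ P

namespace IsPosAtOne

variable {σ : Type*} {a b : FractionRing (MvPolynomial σ ℚ)}

theorem algebraMap_ne_zero {P : MvPolynomial σ ℚ} (hP : 0 < P.eval (fun _ => 1)) :
    algebraMap (MvPolynomial σ ℚ) (FractionRing (MvPolynomial σ ℚ)) P ≠ 0 := by
  intro h
  rw [IsFractionRing.to_map_eq_zero_iff] at h
  simp [h] at hP

theorem ne_zero (ha : IsPosAtOne a) : a ≠ 0 := by
  obtain ⟨P, Q, hP, -, h⟩ := ha
  rintro rfl
  exact algebraMap_ne_zero hP (by rw [← h, zero_mul])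

theorem algebraMap_X (i : σ) :
    IsPosAtOne (algebraMap (MvPolynomial σ ℚ) (FractionRing (MvPolynomial σ ℚ)) (MvPolynomial.X i)) :=
  ⟨MvPolynomial.X i, 1, by simp, by simp, by simp⟩

theorem one : IsPosAtOne (1 : FractionRing (MvPolynomial σ ℚ)) :=
  ⟨1, 1, by simp, by simp, by simp⟩

theorem add (ha : IsPosAtOne a) (hb : IsPosAtOne b) : IsPosAtOne (a + b) := by
  obtain ⟨P, Q, hP, hQ, h⟩ := ha
  obtain ⟨P', Q', hP', hQ', h'⟩ := hb
  refine ⟨P * Q' + P' * Q, Q * Q', ?_, ?_, ?_⟩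
  · simp only [map_add, map_mul]; positivity
  · simp only [map_mul]; positivity
  · simp only [map_add, map_mul, ← h, ← h']; ring

theorem mul (ha : IsPosAtOne a) (hb : IsPosAtOne b) : IsPosAtOne (a * b) := by
  obtain ⟨P, Q, hP, hQ, h⟩ := ha
  obtain ⟨P', Q', hP', hQ', h'⟩ := hb
  refine ⟨P * P', Q * Q', ?_, ?_, ?_⟩
  · simp only [map_mul]; positivity
  · simp only [map_mul]; positivity
  · simp only [map_mul, ← h, ← h']; ring

theorem of_mul (hab : IsPosAtOne (a * b)) (hb : IsPosAtOne b) : IsPosAtOne a := by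
  obtain ⟨P, Q, hP, hQ, h⟩ := hab
  obtain ⟨P', Q', hP', hQ', h'⟩ := hb
  refine ⟨P * Q', Q * P', ?_, ?_, ?_⟩
  · simp only [map_mul]; positivity
  · simp only [map_mul]; positivity
  · simp only [map_mul, ← h, ← h']; ring

theorem prod {ι : Type*} (s : Finset ι) {g : ι → FractionRing (MvPolynomial σ ℚ)}
    (hg : ∀ i ∈ s, IsPosAtOne (g i)) : IsPosAtOne (∏ i ∈ s, g i) :=
  Finset.prod_induction _ _ (fun _ _ => mul) one hg

end IsPosAtOne

/-- A product over the edges `v - 1` and `v` at the vertex `v` of a cycle, restricted by the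
orientation of the edges. -/
theorem prod_filter_cycle {n : ℕ} {M : Type*} [CommMonoid M] (p b c : Fin (n + 2) → Prop)
    [DecidablePred p] [DecidablePred b] [DecidablePred c] (v : Fin (n + 2)) (hp : ∀ k, p k ↔ k = v - 1 ∧ b k ∨ k = v ∧ c k) (g : Fin (n + 2) → M) :
    ∏ k ∈ univ.filter p, g k =
      (if b (v - 1) then g (v - 1) else 1) * (if c v then g v else 1) := by
  have hne : v - 1 ≠ v := by simp
  by_cases hb : b (v - 1) <;> by_cases hc : c v
  · rw [show univ.filter p = {v - 1, v} by ext k; simp [hp]; grind]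
    simp [hb, hc, prod_pair hne]
  · rw [show univ.filter p = {v - 1} by ext k; simp [hp]; grind]
    simp [hb, hc]
  · rw [show univ.filter p = {v} by ext k; simp [hp]; grind]
    simp [hb, hc]
  · rw [show univ.filter p = ∅ by ext k; simp [hp]; grind]
    simp [hb, hc]

/-- Let `Q` be a quiver without oriented cycles whose underlying graph is a
cycle on `N = n + 2 ≥ 2` vertices `0,…,N−1`, where edge `k` joins `k` and `k+1 (mod N)`
(for `N = 2` this gives two parallel edges). The orientation is encoded by
`dir : Fin N → Bool` : edge `k` is the arrow `k → k+1` if `dir k = true`, and the arrow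
`k+1 → k` otherwise. Absence of oriented cycles is expressed by the existence of a
topological ordering `f`. Then each frieze sequence `(X^i_j)_j` in `ℚ(x_0,…,x_{N−1})`
satisfies a linear recurrence. -/
theorem stmt_0 (n : ℕ) (dir : Fin (n+2) → Bool)
    -- no oriented cycles (existence of a topological order on the vertices)
    (hacyclic : ∃ f : Fin (n+2) → ℕ, ∀ k : Fin (n+2),
      f (if dir k then k else k + 1) < f (if dir k then k + 1 else k))
    -- the frieze sequences
    (X : Fin (n+2) → ℕ → FractionRing (MvPolynomial (Fin (n+2)) ℚ))
    (hX0 : ∀ v, X v 0 = algebraMap (MvPolynomial (Fin (n+2)) ℚ)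
      (FractionRing (MvPolynomial (Fin (n+2)) ℚ)) (MvPolynomial.X v))
    (hXrec : ∀ v (j : ℕ), X v (j+1) * X v j =
      1 + (∏ k ∈ univ.filter (fun k : Fin (n+2) => (if dir k then k + 1 else k) = v),
              X (if dir k then k else k + 1) (j+1)) *
          (∏ k ∈ univ.filter (fun k : Fin (n+2) => (if dir k then k else k + 1) = v),
              X (if dir k then k + 1 else k) j)) :
    -- every frieze sequence satisfies a linear recurrence
    ∀ i : Fin (n+2), ∃ s : ℕ, 1 ≤ s ∧
      ∃ coeff : Fin s → FractionRing (MvPolynomial (Fin (n+2)) ℚ),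
        ∀ j : ℕ, X i (j + s) = ∑ t : Fin s, coeff t * X i (j + t.val) := by
  obtain ⟨f, hf⟩ := hacyclic
  have hrec : ∀ v j, X v (j + 1) * X v j =
      1 + X (v - 1) (j + if dir (v - 1) then 1 else 0) * X (v + 1) (j + if dir v then 0 else 1) := by
    intro v j
    rw [hXrec,
      prod_filter_cycle (fun k => (if dir k then k + 1 else k) = v) (fun k => dir k = true)
        (fun k => dir k = false) v (fun k => by cases h : dir k <;> simp [eq_sub_iff_add_eq]),
      prod_filter_cycle (fun k => (if dir k then k else k + 1) = v) (fun k => dir k = false)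
        (fun k => dir k = true) v (fun k => by cases h : dir k <;> simp [eq_sub_iff_add_eq])]
    cases h1 : dir (v - 1) <;> cases h2 : dir v <;> simp [mul_comm]
  have hpos : ∀ j v, IsPosAtOne (X v j) := by
    intro j
    induction j with
    | zero => intro v; rw [hX0]; exact IsPosAtOne.algebraMap_X v
    | succ j ih =>
      intro v
      induction h : f v using Nat.strong_induction_on generalizing v with
      | _ m ih' =>
        refine IsPosAtOne.of_mul (b := X v j) ?_ (ih v)
        rw [hXrec]
        refine IsPosAtOne.one.add (.mul (.prod _ fun k hk => ?_) (.prod _ fun k _ => ih _))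
        refine ih' _ ?_ _ rfl
        rw [← h, ← (mem_filter.1 hk).2]
        exact hf k
  obtain ⟨a, -, ha⟩ := exists_min_image univ f univ_nonempty
  obtain ⟨b, -, hb⟩ := exists_max_image univ f univ_nonempty
  let c : ℤ → Fin (n + 2) := fun i => ((i : ZMod (n + 2)) : ZMod (n + 2))
  have hc1 : ∀ i, c (i + 1) = c i + 1 := fun i => Int.cast_add (R := ZMod (n + 2)) i 1 |>.trans (by
    rw [Int.cast_one]; rfl)
  have hc1' : ∀ i, c (i - 1) = c i - 1 := fun i => by
    rw [eq_sub_iff_add_eq, ← hc1, sub_add_cancel]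
  have hcN : ∀ i, c (i + (n + 2 : ℕ)) = c i := fun i => by
    have : ((i + (n + 2 : ℕ) : ℤ) : ZMod (n + 2)) = i := by
      rw [Int.cast_add, Int.cast_natCast, ZMod.natCast_self, add_zero]
    exact this
  have hcs : Function.Surjective c := ZMod.intCast_surjective
  have hdt : ∃ i, dir (c i) = true := by
    obtain ⟨i, hi⟩ := hcs a
    refine ⟨i, ?_⟩
    rw [hi]
    by_contra h
    have := hf a
    rw [if_neg h, if_neg h] at this
    exact this.not_ge (ha _ (mem_univ _))
  have hdf : ∃ i, dir (c i) = false := by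
    obtain ⟨i, hi⟩ := hcs b
    refine ⟨i, ?_⟩
    rw [hi]
    by_contra h
    rw [Bool.not_eq_false] at h
    have := hf b
    rw [if_pos h, if_pos h] at this
    exact this.not_ge (hb _ (mem_univ _))
  obtain ⟨s, τ, hs, H⟩ := exists_frieze_recurrence (N := (n + 2 : ℕ)) (by positivity)
    (d := fun i => dir (c i)) (fun i => by simp only [hcN]) (f := fun i => f (c i))
    (fun i hi => by simpa [hi, hc1] using hf (c i))
    (fun i hi => by simpa [hi, hc1] using hf (c i)) hdt hdf (X := fun i => X (c i))
    (fun i => by simp only [hcN]) (fun i j => (hpos _ _).ne_zero)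
    (fun i j => by simp only [hc1, hc1']; exact hrec _ _)
  intro i
  obtain ⟨v, rfl⟩ := hcs i
  refine ⟨2 * s, by omega, fun t => if t.1 = s then τ else if t.1 = 0 then -1 else 0, fun j => ?_⟩
  rw [H v j, Fin.sum_univ_eq_sum_range (fun t => (if t = s then τ else if t = 0 then -1 else 0) *
    X (c v) (j + t)), sum_eq_add_of_mem s 0 (by simp; omega) (by simp; omega) hs.ne'
    (fun t _ ht => by simp [ht.1, ht.2])]
  simp [hs.ne, sub_eq_add_neg]
end

section
/- Let n ≥ 4 and let Q be any quiver (i.e., any orientation of the edges) whose underlying graph is the extended Dynkin diagram D̃_n: vertex set {0,1,…,n} with edges {0,2}, {1,2}, {i,i+1} for 2 ≤ i ≤ n−3, {n−2,n−1} and {n−2,n}. Then for every vertex i of Q the frieze sequence (X^i_j)_{j≥0} satisfies a linear recurrence over the field ℚ(x_0,…,x_n). -/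
/-- The (ordered) edge description of the extended Dynkin diagram D̃_n on vertices
`{0,…,n}` : edges `{0,2}`, `{1,2}`, `{i,i+1}` for `2 ≤ i ≤ n−3`, `{n−2,n−1}`, `{n−2,n}`. -/
def dTildeEdge (n a b : ℕ) : Prop :=
  (a = 0 ∧ b = 2) ∨ (a = 1 ∧ b = 2) ∨ (2 ≤ a ∧ a ≤ n - 3 ∧ b = a + 1) ∨
  (a = n - 2 ∧ b = n - 1) ∨ (a = n - 2 ∧ b = n)

section LinearRecurrence

variable {F : Type*} [Field F]

/-- The shift operator on sequences, as an algebra homomorphism. -/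
def seqShift (F : Type*) [Field F] : (ℕ → F) →ₐ[F] (ℕ → F) where
  toFun a j := a (j + 1)
  map_one' := rfl
  map_mul' _ _ := rfl
  map_zero' := rfl
  map_add' _ _ := rfl
  commutes' _ := rfl

/-- A sequence is recurrent if it lies in a finite-dimensional shift-invariant space. -/
def IsRecurrent (a : ℕ → F) : Prop :=
  ∃ W : Submodule F (ℕ → F), W.FG ∧ W.map (seqShift F).toLinearMap ≤ W ∧ a ∈ W

theorem IsRecurrent.exists_coeff {a : ℕ → F} (ha : IsRecurrent a) :
    ∃ s : ℕ, 1 ≤ s ∧ ∃ coeff : Fin s → F,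
      ∀ j : ℕ, a (j + s) = ∑ t : Fin s, coeff t * a (j + t.val) := by
  obtain ⟨W, hfg, hW, haW⟩ := ha
  have hW' : ∀ x ∈ W, (seqShift F).toLinearMap x ∈ W := fun x hx =>
    hW (Submodule.mem_map_of_mem hx)
  have : Module.Finite F W := Module.Finite.iff_fg.mpr hfg
  obtain ⟨P, hP, hP0⟩ : ∃ P : Polynomial F, P.Monic ∧
      Polynomial.aeval ((seqShift F).toLinearMap.restrict hW') P = 0 :=
    ⟨_, LinearMap.charpoly_monic _, LinearMap.aeval_self_charpoly _⟩
  have hpow : ∀ (i : ℕ) (x : W) (j : ℕ),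
      ((((seqShift F).toLinearMap.restrict hW') ^ i) x : ℕ → F) j = (x : ℕ → F) (j + i) := by
    intro i
    induction i with
    | zero => intro x j; simp
    | succ i ih =>
      intro x j
      rw [pow_succ, Module.End.mul_apply, ih]
      change (x : ℕ → F) (j + i + 1) = _
      rw [add_assoc]
  have hsum : ∀ j, ∑ i ∈ Finset.range (P.natDegree + 1), P.coeff i * a (j + i) = 0 := by
    intro j
    rw [Polynomial.aeval_eq_sum_range] at hP0
    have h := congrArg (fun f : Module.End F W => ((f ⟨a, haW⟩ : W) : ℕ → F) j) hP0
    simpa [LinearMap.sum_apply, Finset.sum_apply, hpow] using h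
  refine ⟨P.natDegree + 1, by omega,
    fun t => if t.val = 0 then 0 else -P.coeff (t.val - 1), fun j => ?_⟩
  rw [Fin.sum_univ_succ]
  have h := hsum (j + 1)
  rw [Finset.sum_range_succ, hP.coeff_natDegree, one_mul, ← Fin.sum_univ_eq_sum_range
    (fun i => P.coeff i * a (j + 1 + i))] at h
  have hj : j + (P.natDegree + 1) = j + 1 + P.natDegree := by ring
  simp only [Fin.val_zero, if_true, zero_mul, zero_add, Fin.val_succ, Nat.succ_ne_zero,
    if_false, Nat.add_sub_cancel, neg_mul, Finset.sum_neg_distrib]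
  rw [hj, eq_neg_iff_add_eq_zero, add_comm, ← h]
  congr 1
  exact Finset.sum_congr rfl fun i _ => by rw [add_assoc j 1, add_comm 1]

theorem IsRecurrent.add {a b : ℕ → F} (ha : IsRecurrent a) (hb : IsRecurrent b) :
    IsRecurrent (a + b) := by
  obtain ⟨V, hV, hV', haV⟩ := ha
  obtain ⟨W, hW, hW', hbW⟩ := hb
  refine ⟨V ⊔ W, hV.sup hW, ?_, Submodule.add_mem_sup haV hbW⟩
  rw [Submodule.map_sup]
  exact sup_le_sup hV' hW'

theorem IsRecurrent.mul {a b : ℕ → F} (ha : IsRecurrent a) (hb : IsRecurrent b) :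
    IsRecurrent (a * b) := by
  obtain ⟨V, hV, hV', haV⟩ := ha
  obtain ⟨W, hW, hW', hbW⟩ := hb
  refine ⟨V * W, hV.mul hW, ?_, Submodule.mul_mem_mul haV hbW⟩
  rw [Submodule.map_mul]
  exact mul_le_mul' hV' hW'

theorem IsRecurrent.comp_succ {a : ℕ → F} (ha : IsRecurrent a) :
    IsRecurrent fun j => a (j + 1) := by
  obtain ⟨W, hW, hW', haW⟩ := ha
  exact ⟨W, hW, hW', hW' (Submodule.mem_map_of_mem haW)⟩

theorem IsRecurrent.comp_add {a : ℕ → F} (ha : IsRecurrent a) (k : ℕ) :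
    IsRecurrent fun j => a (j + k) := by
  induction k with
  | zero => exact ha
  | succ k ih =>
    convert ih.comp_succ using 2
    rw [add_right_comm, add_assoc]

theorem IsRecurrent.of_comp_add {a : ℕ → F} {k : ℕ} (ha : IsRecurrent fun j => a (j + k)) :
    IsRecurrent a := by
  induction k with
  | zero => exact ha
  | succ k ih =>
    apply ih
    obtain ⟨W, hW, hW', haW⟩ := ha
    refine ⟨W ⊔ Submodule.span F {fun j => a (j + k)}, hW.sup (Submodule.fg_span_singleton _),
      ?_, Submodule.mem_sup_right (Submodule.mem_span_singleton_self _)⟩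
    rw [Submodule.map_sup, Submodule.map_span, Set.image_singleton]
    refine sup_le (hW'.trans le_sup_left) ((Submodule.span_singleton_le_iff_mem _ _).mpr ?_)
    refine Submodule.mem_sup_left ?_
    convert haW using 1
    funext j
    change a (j + 1 + k) = _
    rw [add_right_comm, add_assoc]

/-- The space of sequences of period `N`. -/
def periodicSeq (F : Type*) [Field F] (N : ℕ) : Submodule F (ℕ → F) where
  carrier := {a | Function.Periodic a N}
  add_mem' ha hb := ha.add hb
  zero_mem' _ := rfl
  smul_mem' c _ ha := ha.smul c

theorem periodicSeq_fg {N : ℕ} (hN : 0 < N) : (periodicSeq F N).FG := by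
  have h : periodicSeq F N ≤
      LinearMap.range (LinearMap.funLeft F F fun j => (⟨j % N, Nat.mod_lt j hN⟩ : Fin N)) := by
    intro a ha
    refine ⟨fun i => a i, funext fun j => ?_⟩
    exact Function.Periodic.map_mod_nat ha j
  have hfg : (LinearMap.range
      (LinearMap.funLeft F F fun j => (⟨j % N, Nat.mod_lt j hN⟩ : Fin N))).FG := by
    rw [LinearMap.range_eq_map]
    exact Submodule.FG.map _ Module.Finite.fg_top
  exact Submodule.FG.of_le hfg h

theorem periodicSeq_map_shift_le (N : ℕ) :
    (periodicSeq F N).map (seqShift F).toLinearMap ≤ periodicSeq F N := by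
  rw [Submodule.map_le_iff_le_comap]
  intro a ha j
  change a (j + N + 1) = a (j + 1)
  rw [add_right_comm]
  exact ha (j + 1)

theorem isRecurrent_of_periodic {N : ℕ} (hN : 0 < N) {a : ℕ → F} (ha : Function.Periodic a N) :
    IsRecurrent a :=
  ⟨periodicSeq F N, periodicSeq_fg hN, periodicSeq_map_shift_le N, ha⟩

theorem isRecurrent_const (c : F) : IsRecurrent fun _ : ℕ => c :=
  isRecurrent_of_periodic one_pos fun _ => rfl

/-- Two sequences coupled by a second-order recursion with periodic coefficient are recurrent. -/
theorem isRecurrent_of_coupled {N : ℕ} (hN : 0 < N) {e p q : ℕ → F}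
    (he : Function.Periodic e N)
    (hp : ∀ j, p (j + 2) + p j = e j * q (j + 1)) (hq : ∀ j, q (j + 2) + q j = e j * p (j + 1)) :
    IsRecurrent p ∧ IsRecurrent q := by
  set S := seqShift F
  set U := Submodule.span F ({p, q, S p, S q} : Set (ℕ → F)) with hU
  have hP1 : (1 : ℕ → F) ∈ periodicSeq F N := fun _ => rfl
  have hPP : periodicSeq F N * periodicSeq F N ≤ periodicSeq F N :=
    Submodule.mul_le.mpr fun a ha b hb => Function.Periodic.mul ha hb
  have hle : U ≤ periodicSeq F N * U := fun a ha => by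
    simpa using Submodule.mul_mem_mul hP1 ha
  have hgen : ∀ a ∈ ({p, q, S p, S q} : Set (ℕ → F)), a ∈ U := fun a ha =>
    Submodule.subset_span ha
  have hUS : U.map S.toLinearMap ≤ periodicSeq F N * U := by
    rw [hU, Submodule.map_span, Submodule.span_le]
    rintro _ ⟨a, ha, rfl⟩
    have key : ∀ x y : ℕ → F, x ∈ U → S y ∈ U → (∀ j, x (j + 2) + x j = e j * y (j + 1)) →
        S (S x) ∈ periodicSeq F N * U := by
      intro x y hx hy hxy
      have : S (S x) = e * S y - x := by
        funext j
        exact eq_sub_of_add_eq (hxy j)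
      rw [this]
      exact Submodule.sub_mem _ (Submodule.mul_mem_mul he hy) (hle hx)
    rcases ha with rfl | rfl | rfl | rfl
    · exact hle (hgen _ (by simp))
    · exact hle (hgen _ (by simp))
    · exact key p q (hgen _ (by simp)) (hgen _ (by simp)) hp
    · exact key q p (hgen _ (by simp)) (hgen _ (by simp)) hq
  have hW : (periodicSeq F N * U).map S.toLinearMap ≤ periodicSeq F N * U := by
    rw [Submodule.map_mul]
    refine (mul_le_mul' (periodicSeq_map_shift_le N) hUS).trans ?_
    rw [← mul_assoc]
    exact mul_le_mul' hPP le_rfl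
  have hfg : (periodicSeq F N * U).FG :=
    (periodicSeq_fg hN).mul (Submodule.fg_span (by simp))
  exact ⟨⟨_, hfg, hW, hle (hgen _ (by simp))⟩, ⟨_, hfg, hW, hle (hgen _ (by simp))⟩⟩

end LinearRecurrence

section Strip

variable {F : Type*} [Field F]

/-- The local computation at a fork of the diagram. -/
theorem fork_identities {p₀ p₁ p₂ q₀ q₁ q₂ A B C : F} (hq₁ : q₁ ≠ 0) (hp₁ : p₁ ≠ 0)
    (hpA : p₁ * p₀ = 1 + A) (hqA : q₁ * q₀ = 1 + A) (hpB : p₂ * p₁ = 1 + B)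
    (hqB : q₂ * q₁ = 1 + B) (hC : B * A = 1 + p₁ * q₁ * C) :
    q₂ + q₀ = (p₂ + p₀) / q₁ * p₁ ∧ C + p₀ * q₀ = (p₂ + p₀) / q₁ * A ∧
      p₂ * q₂ + C = (p₂ + p₀) / q₁ * B := by
  refine ⟨?_, ?_, ?_⟩
  · field_simp
    linear_combination hqB + hqA - hpB - hpA
  · rw [div_mul_eq_mul_div, eq_div_iff hq₁]
    apply mul_left_cancel₀ hp₁
    linear_combination -hC + q₁ * q₀ * hpA + (1 + A) * hqA - A * hpB - A * hpA
  · rw [div_mul_eq_mul_div, eq_div_iff hq₁]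
    apply mul_left_cancel₀ hp₁
    linear_combination -hC + q₂ * q₁ * hpB + (1 + B) * hqB - B * hpB - B * hpA

/-- Data of a frieze of type `D̃` in the linear orientation, `a 0` and `a (m + 1)` being the
products of the two sequences at either fork. The forks carry recurrent sequences, and so does
the chain between them. -/
theorem isRecurrent_strip {m : ℕ} (hm : 1 ≤ m) {p q p' q' : ℕ → F} {a : ℕ → ℕ → F}
    (hp₀ : ∀ s, p s ≠ 0) (hq₀ : ∀ s, q s ≠ 0) (hp'₀ : ∀ s, p' s ≠ 0) (hq'₀ : ∀ s, q' s ≠ 0)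
    (ha₀ : ∀ k s, 1 ≤ k → k ≤ m → a k s ≠ 0)
    (hbot : ∀ s, a 0 s = p s * q s) (htop : ∀ s, a (m + 1) s = p' s * q' s)
    (hp : ∀ s, p (s + 1) * p s = 1 + a 1 s) (hq : ∀ s, q (s + 1) * q s = 1 + a 1 s)
    (hp' : ∀ s, p' (s + 1) * p' s = 1 + a m (s + 1))
    (hq' : ∀ s, q' (s + 1) * q' s = 1 + a m (s + 1))
    (ha : ∀ k s, k + 1 ≤ m → a (k + 1) (s + 1) * a (k + 1) s = 1 + a k (s + 1) * a (k + 2) s) :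
    IsRecurrent p ∧ IsRecurrent q ∧ IsRecurrent p' ∧ IsRecurrent q' ∧
      ∀ k, k ≤ m → IsRecurrent (a k) := by
  obtain ⟨l, rfl⟩ : ∃ l, m = l + 1 := ⟨m - 1, by omega⟩
  set e : ℕ → F := fun s => (p (s + 2) + p s) / q (s + 1)
  set e' : ℕ → F := fun s => (p' (s + 2) + p' s) / q' (s + 1)
  have hL : ∀ s, q (s + 2) + q s = e s * p (s + 1) ∧ a 2 s + p s * q s = e s * a 1 s ∧
      p (s + 2) * q (s + 2) + a 2 s = e s * a 1 (s + 1) := fun s =>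
    fork_identities (hq₀ _) (hp₀ _) (hp s) (hq s) (hp (s + 1)) (hq (s + 1))
      (by rw [ha 0 s hm, hbot])
  have hR : ∀ s, q' (s + 2) + q' s = e' s * p' (s + 1) ∧
      a l (s + 2) + p' s * q' s = e' s * a (l + 1) (s + 1) ∧
      p' (s + 2) * q' (s + 2) + a l (s + 2) = e' s * a (l + 1) (s + 2) := fun s =>
    fork_identities (hq'₀ _) (hp'₀ _) (hp' s) (hq' s) (hp' (s + 1)) (hq' (s + 1))
      (by rw [ha l (s + 1) le_rfl, htop]; ring)
  have hrow : ∀ k s, k + 1 ≤ l + 1 → a (k + 2) s + a k s = e (s + k) * a (k + 1) s := by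
    intro k
    induction k with
    | zero => intro s _; simpa [hbot] using (hL s).2.1
    | succ k ih =>
      intro s hk
      have h := ih (s + 1) (by omega)
      apply mul_left_cancel₀ (ha₀ (k + 1) (s + 1) (by omega) (by omega))
      rw [show s + (k + 1) = s + 1 + k by ring]
      linear_combination a (k + 2) s * h + ha k s (by omega) - ha (k + 1) s (by omega)
  have hcol : ∀ k s, k + 1 ≤ l + 1 → a k (s + 2) + a (k + 2) s = e s * a (k + 1) (s + 1) := by
    intro k
    induction k with
    | zero => intro s _; simpa [hbot] using (hL s).2.2
    | succ k ih =>
      intro s hk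
      have h := ih s (by omega)
      apply mul_left_cancel₀ (ha₀ (k + 1) (s + 1) (by omega) (by omega))
      linear_combination a (k + 2) (s + 1) * h + ha k (s + 1) (by omega) - ha (k + 1) s (by omega)
  have hee : ∀ s, e' s = e s := fun s => by
    apply mul_right_cancel₀ (ha₀ (l + 1) (s + 1) (by omega) le_rfl)
    rw [← (hR s).2.1, ← hcol l s le_rfl, htop]
  have hper : Function.Periodic e (l + 2) := fun s => by
    rw [← hee s]
    apply mul_right_cancel₀ (ha₀ (l + 1) (s + 2) (by omega) le_rfl)
    rw [← (hR s).2.2, show s + (l + 2) = s + 2 + l by ring, ← hrow l (s + 2) le_rfl, htop]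
  have hper' : Function.Periodic e' (l + 2) := by rwa [show e' = e from funext hee]
  obtain ⟨rp, rq⟩ := isRecurrent_of_coupled (by omega) hper
    (fun s => (div_mul_cancel₀ _ (hq₀ (s + 1))).symm) (fun s => (hL s).1)
  obtain ⟨rp', rq'⟩ := isRecurrent_of_coupled (by omega) hper'
    (fun s => (div_mul_cancel₀ _ (hq'₀ (s + 1))).symm) (fun s => (hR s).1)
  have rneg := isRecurrent_const (-1 : F)
  have r0 : IsRecurrent (a 0) := by
    rw [show a 0 = p * q from funext hbot]
    exact rp.mul rq
  have r1 : IsRecurrent (a 1) := by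
    convert (rp.comp_succ.mul rp).add rneg using 1
    funext s
    simp [hp s]
  have hchain : ∀ k, k ≤ l → IsRecurrent (a k) ∧ IsRecurrent (a (k + 1)) := by
    intro k
    induction k with
    | zero => exact fun _ => ⟨r0, r1⟩
    | succ k ih =>
      intro hk
      obtain ⟨h1, h2⟩ := ih (by omega)
      refine ⟨h2, ?_⟩
      convert (((isRecurrent_of_periodic (by omega) hper).comp_add k).mul h2).add
        (rneg.mul h1) using 1
      funext s
      simp only [Pi.add_apply, Pi.mul_apply]
      linear_combination hrow k s (by omega)
  refine ⟨rp, rq, rp', rq', fun k hk => ?_⟩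
  rcases Nat.lt_or_ge k (l + 1) with h | h
  · exact (hchain k (by omega)).1
  · obtain rfl : k = l + 1 := by omega
    exact (hchain l le_rfl).2

end Strip

section Orientation

/-- Offsets turning an arbitrary orientation of `D̃_n` into the linear one, together with the
rank function of the linear orientation. -/
theorem exists_offset (n : ℕ) (hn : 4 ≤ n) (mult : Fin (n + 1) → Fin (n + 1) → ℕ)
    (hedge : ∀ u v : Fin (n + 1), dTildeEdge n u.val v.val → mult u v + mult v u = 1) :
    ∃ g lin : Fin (n + 1) → ℕ, ∀ u v : Fin (n + 1), dTildeEdge n u.val v.val →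
      g v = g u + mult v u ∧ lin v = lin u + 1 := by
  set μ : ℕ → ℕ → ℕ := fun i j =>
    if h : i < n + 1 ∧ j < n + 1 then mult ⟨i, h.1⟩ ⟨j, h.2⟩ else 0 with hμ
  have hμv : ∀ u v : Fin (n + 1), μ u.val v.val = mult u v := fun u v => by
    simp [hμ, Fin.is_le]
  have hsum : ∀ a b, a < n + 1 → b < n + 1 → dTildeEdge n a b → μ a b + μ b a = 1 := by
    intro a b ha hb h
    have := hedge ⟨a, ha⟩ ⟨b, hb⟩ h
    rwa [← hμv, ← hμv] at this
  have h02 := hsum 0 2 (by omega) (by omega) (by simp [dTildeEdge])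
  have h12 := hsum 1 2 (by omega) (by omega) (by simp [dTildeEdge])
  set G : ℕ → ℕ := fun i => 1 + ∑ k ∈ Finset.Ico 2 i, μ (k + 1) k with hG
  have hG2 : G 2 = 1 := by simp [hG]
  have hGs : ∀ i, 2 ≤ i → G (i + 1) = G i + μ (i + 1) i := fun i hi => by
    simp only [hG]
    rw [Finset.sum_Ico_succ_top hi, add_assoc]
  refine ⟨fun v => if v.val = 0 then 1 - μ 2 0 else if v.val = 1 then 1 - μ 2 1 else
      if v.val ≤ n - 2 then G v.val else G (n - 2) + μ v.val (n - 2),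
    fun v => if v.val ≤ 1 then 0 else if v.val ≤ n - 2 then v.val - 1 else n - 2, ?_⟩
  intro u v huv
  rw [← hμv]
  obtain ⟨u, hu⟩ := u
  obtain ⟨v, hv⟩ := v
  simp only at huv ⊢
  rcases huv with ⟨rfl, rfl⟩ | ⟨rfl, rfl⟩ | ⟨h1, h2, rfl⟩ | ⟨rfl, rfl⟩ | ⟨rfl, rfl⟩
  · rw [if_neg (by omega), if_neg (by omega), if_pos (by omega), if_pos rfl, hG2,
      if_neg (by omega), if_pos (by omega), if_pos (by omega)]
    omega
  · rw [if_neg (by omega), if_neg (by omega), if_pos (by omega), if_neg (by omega), if_pos rfl,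
      hG2, if_neg (by omega), if_pos (by omega), if_pos (by omega)]
    omega
  · have := hGs u h1
    constructor
    · rw [if_neg (by omega), if_neg (by omega), if_pos (by omega), if_neg (by omega),
        if_neg (by omega), if_pos (by omega), this]
    · rw [if_neg (by omega), if_pos (by omega), if_neg (by omega), if_pos (by omega)]
      omega
  all_goals
    constructor
    · rw [if_neg (by omega), if_neg (by omega), if_neg (by omega), if_neg (by omega),
        if_neg (by omega), if_pos le_rfl]
    · rw [if_neg (by omega), if_neg (by omega), if_neg (by omega), if_pos (by omega)]
      omega

open Classical in
/-- In the shifted indexing every frieze relation is that of the linear orientation. -/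
theorem linear_relation {n : ℕ} {F : Type*} [Field F] {mult : Fin (n + 1) → Fin (n + 1) → ℕ}
    (hedge : ∀ u v : Fin (n + 1), dTildeEdge n u.val v.val → mult u v + mult v u = 1)
    (hnonedge : ∀ u v : Fin (n + 1),
      ¬ dTildeEdge n u.val v.val → ¬ dTildeEdge n v.val u.val → mult u v = 0)
    {X : Fin (n + 1) → ℕ → F}
    (hX : ∀ v (j : ℕ), X v (j + 1) * X v j =
      1 + (∏ s : Fin (n + 1), X s (j + 1) ^ mult s v) * (∏ d : Fin (n + 1), X d j ^ mult v d))
    {g lin : Fin (n + 1) → ℕ} (hg : ∀ u v : Fin (n + 1), dTildeEdge n u.val v.val →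
      g v = g u + mult v u ∧ lin v = lin u + 1) (v : Fin (n + 1)) (j : ℕ) :
    X v (j + 1 + g v) * X v (j + g v) =
      1 + (∏ w with dTildeEdge n w.val v.val, X w (j + 1 + g w)) *
        ∏ w with dTildeEdge n v.val w.val, X w (j + g w) := by
  rw [show j + 1 + g v = j + g v + 1 by ring, hX, Finset.prod_filter, Finset.prod_filter,
    ← Finset.prod_mul_distrib, ← Finset.prod_mul_distrib]
  congr 1
  refine Finset.prod_congr rfl fun w _ => ?_
  by_cases h1 : dTildeEdge n w.val v.val
  · have h2 : ¬ dTildeEdge n v.val w.val := fun h2 => by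
      have := (hg _ _ h1).2
      have := (hg _ _ h2).2
      omega
    have hs := hedge _ _ h1
    have hgv := (hg _ _ h1).1
    rw [if_pos h1, if_neg h2]
    obtain ⟨h, h'⟩ | ⟨h, h'⟩ : (mult w v = 0 ∧ mult v w = 1) ∨ (mult w v = 1 ∧ mult v w = 0) := by
      omega
    · rw [h, h', pow_zero, pow_one, one_mul, mul_one, hgv, h']
      congr 1
      ring
    · rw [h, h', pow_zero, pow_one, hgv, h']
      congr 2
      ring
  · by_cases h2 : dTildeEdge n v.val w.val
    · have hs := hedge _ _ h2
      have hgw := (hg _ _ h2).1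
      rw [if_neg h1, if_pos h2]
      obtain ⟨h, h'⟩ | ⟨h, h'⟩ :
          (mult w v = 0 ∧ mult v w = 1) ∨ (mult w v = 1 ∧ mult v w = 0) := by
        omega
      · rw [h, h', pow_zero, pow_one, hgw, h, add_zero]
      · rw [h, h', pow_zero, pow_one, hgw, h, mul_one, one_mul]
        rfl
    · rw [if_neg h1, if_neg h2, hnonedge _ _ h1 h2, hnonedge _ _ h2 h1]
      simp

open Classical in
/-- The frieze of `D̃_n` in the linear orientation consists of recurrent sequences. -/
theorem isRecurrent_linear {n : ℕ} (hn : 4 ≤ n) {F : Type*} [Field F] {y : ℕ → ℕ → F}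
    (hy₀ : ∀ i j, i ≤ n → y i j ≠ 0)
    (hy : ∀ i j, i ≤ n → y i (j + 1) * y i j =
      1 + (∏ w ∈ Finset.range (n + 1) with dTildeEdge n w i, y w (j + 1)) *
        ∏ w ∈ Finset.range (n + 1) with dTildeEdge n i w, y w j) :
    ∀ i, i ≤ n → IsRecurrent (y i) := by
  set a : ℕ → ℕ → F := fun k s =>
    if k = 0 then y 0 s * y 1 s else if k ≤ n - 3 then y (k + 1) s else y (n - 1) s * y n s
    with ha
  have ha_mid : ∀ k s, 1 ≤ k → k ≤ n - 3 → a k s = y (k + 1) s := fun k s h1 h2 => by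
    simp only [ha]
    rw [if_neg (by omega), if_pos h2]
  have below_leaf : ∀ i, i = 0 ∨ i = 1 →
      (Finset.range (n + 1)).filter (fun w => dTildeEdge n w i) = ∅ := fun i hi => by
    ext w
    rw [Finset.mem_filter, Finset.mem_range]
    simp only [dTildeEdge, Finset.notMem_empty, iff_false]
    omega
  have above_leaf : ∀ i, i = 0 ∨ i = 1 →
      (Finset.range (n + 1)).filter (fun w => dTildeEdge n i w) = {2} := fun i hi => by
    ext w
    rw [Finset.mem_filter, Finset.mem_range]
    simp only [dTildeEdge, Finset.mem_singleton]
    omega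
  have below_leaf' : ∀ i, i = n - 1 ∨ i = n →
      (Finset.range (n + 1)).filter (fun w => dTildeEdge n w i) = {n - 2} := fun i hi => by
    ext w
    rw [Finset.mem_filter, Finset.mem_range]
    simp only [dTildeEdge, Finset.mem_singleton]
    omega
  have above_leaf' : ∀ i, i = n - 1 ∨ i = n →
      (Finset.range (n + 1)).filter (fun w => dTildeEdge n i w) = ∅ := fun i hi => by
    ext w
    rw [Finset.mem_filter, Finset.mem_range]
    simp only [dTildeEdge, Finset.notMem_empty, iff_false]
    omega
  have below_mid : ∀ k s, k + 1 ≤ n - 3 →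
      ∏ w ∈ Finset.range (n + 1) with dTildeEdge n w (k + 2), y w s = a k s := by
    intro k s hk
    simp only [ha]
    rcases Nat.eq_zero_or_pos k with rfl | hk0
    · have : (Finset.range (n + 1)).filter (fun w => dTildeEdge n w (0 + 2)) = {0, 1} := by
        ext w
        rw [Finset.mem_filter, Finset.mem_range]
        simp only [dTildeEdge, Finset.mem_singleton, Finset.mem_insert, and_true]
        omega
      rw [this, Finset.prod_pair (by omega), if_pos rfl]
    · have : (Finset.range (n + 1)).filter (fun w => dTildeEdge n w (k + 2)) = {k + 1} := by
        ext w
        rw [Finset.mem_filter, Finset.mem_range]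
        simp only [dTildeEdge, Finset.mem_singleton]
        omega
      rw [this, Finset.prod_singleton, if_neg (by omega), if_pos (by omega)]
  have above_mid : ∀ k s, k + 1 ≤ n - 3 →
      ∏ w ∈ Finset.range (n + 1) with dTildeEdge n (k + 2) w, y w s = a (k + 2) s := by
    intro k s hk
    simp only [ha]
    rw [if_neg (by omega)]
    by_cases hk' : k + 2 ≤ n - 3
    · have : (Finset.range (n + 1)).filter (fun w => dTildeEdge n (k + 2) w) = {k + 3} := by
        ext w
        rw [Finset.mem_filter, Finset.mem_range]
        simp only [dTildeEdge, Finset.mem_singleton]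
        omega
      rw [this, Finset.prod_singleton, if_pos hk']
    · have : (Finset.range (n + 1)).filter (fun w => dTildeEdge n (k + 2) w) = {n - 1, n} := by
        ext w
        rw [Finset.mem_filter, Finset.mem_range]
        simp only [dTildeEdge, Finset.mem_singleton, Finset.mem_insert]
        omega
      rw [this, Finset.prod_pair (by omega), if_neg hk']
  have hleaf : ∀ i s, i = 0 ∨ i = 1 → y i (s + 1) * y i s = 1 + a 1 s := fun i s hi => by
    rw [hy i s (by omega), below_leaf i hi, above_leaf i hi, Finset.prod_empty,
      Finset.prod_singleton, one_mul, ha_mid 1 s le_rfl (by omega)]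
  have hleaf' : ∀ i s, i = n - 1 ∨ i = n → y i (s + 1) * y i s = 1 + a (n - 3) (s + 1) :=
    fun i s hi => by
      rw [hy i s (by omega), below_leaf' i hi, above_leaf' i hi, Finset.prod_empty,
        Finset.prod_singleton, mul_one, ha_mid (n - 3) _ (by omega) le_rfl,
        show n - 3 + 1 = n - 2 by omega]
  obtain ⟨r0, r1, r2, r3, r4⟩ := isRecurrent_strip (m := n - 3) (by omega)
    (p := y 0) (q := y 1) (p' := y (n - 1)) (q' := y n) (a := a)
    (fun s => hy₀ _ s (by omega)) (fun s => hy₀ _ s (by omega)) (fun s => hy₀ _ s (by omega))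
    (fun s => hy₀ _ s le_rfl)
    (fun k s h1 h2 => by
      rw [ha_mid k s h1 h2]
      exact hy₀ _ s (by omega))
    (fun s => by simp [ha])
    (fun s => by simp [ha])
    (fun s => hleaf 0 s (Or.inl rfl)) (fun s => hleaf 1 s (Or.inr rfl))
    (fun s => hleaf' _ s (Or.inl rfl)) (fun s => hleaf' _ s (Or.inr rfl))
    (fun k s hk => by
      rw [ha_mid _ _ (by omega) hk, ha_mid _ _ (by omega) hk, hy (k + 2) s (by omega),
        below_mid k _ hk, above_mid k _ hk])
  intro i hi
  obtain rfl | rfl | rfl | rfl | ⟨h1, h2⟩ :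
      i = 0 ∨ i = 1 ∨ i = n - 1 ∨ i = n ∨ (2 ≤ i ∧ i ≤ n - 2) := by omega
  · exact r0
  · exact r1
  · exact r2
  · exact r3
  · convert r4 (i - 1) (by omega) using 1
    funext s
    rw [ha_mid _ _ (by omega) (by omega), Nat.sub_add_cancel (by omega)]

end Orientation

section Positivity

/-- Fractions of polynomials taking positive values at `(1, …, 1)`. -/
def IsPositiveFraction {σ : Type*} (f : FractionRing (MvPolynomial σ ℚ)) : Prop :=
  ∃ p q : MvPolynomial σ ℚ, 0 < MvPolynomial.eval 1 p ∧ 0 < MvPolynomial.eval 1 q ∧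
    f * algebraMap _ _ q = algebraMap _ _ p

namespace IsPositiveFraction

variable {σ : Type*} {f g : FractionRing (MvPolynomial σ ℚ)}

theorem algebraMap_ne_zero {p : MvPolynomial σ ℚ} (hp : 0 < MvPolynomial.eval 1 p) :
    algebraMap _ (FractionRing (MvPolynomial σ ℚ)) p ≠ 0 := by
  intro h
  rw [FaithfulSMul.algebraMap_eq_zero_iff] at h
  simp [h] at hp

theorem ne_zero (hf : IsPositiveFraction f) : f ≠ 0 := by
  obtain ⟨p, q, hp, -, h⟩ := hf
  rintro rfl
  rw [zero_mul] at h
  exact algebraMap_ne_zero hp h.symm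

theorem one : IsPositiveFraction (1 : FractionRing (MvPolynomial σ ℚ)) :=
  ⟨1, 1, by simp, by simp, by simp⟩

theorem of_X (i : σ) : IsPositiveFraction
    (algebraMap (MvPolynomial σ ℚ) (FractionRing (MvPolynomial σ ℚ)) (MvPolynomial.X i)) :=
  ⟨MvPolynomial.X i, 1, by simp, by simp, by simp⟩

theorem mul (hf : IsPositiveFraction f) (hg : IsPositiveFraction g) :
    IsPositiveFraction (f * g) := by
  obtain ⟨p, q, hp, hq, h⟩ := hf
  obtain ⟨p', q', hp', hq', h'⟩ := hg
  refine ⟨p * p', q * q', by simp [hp, hp'], by simp [hq, hq'], ?_⟩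
  rw [map_mul, map_mul, ← h, ← h']
  ring

theorem one_add (hf : IsPositiveFraction f) : IsPositiveFraction (1 + f) := by
  obtain ⟨p, q, hp, hq, h⟩ := hf
  refine ⟨q + p, q, by simpa using add_pos hq hp, hq, ?_⟩
  rw [map_add, ← h]
  ring

theorem of_mul (hf : IsPositiveFraction (f * g)) (hg : IsPositiveFraction g) :
    IsPositiveFraction f := by
  have hg0 := hg.ne_zero
  obtain ⟨p, q, hp, hq, h⟩ := hf
  obtain ⟨p', q', hp', hq', h'⟩ := hg
  refine ⟨p * q', p' * q, by simp [hp, hq'], by simp [hq, hp'], ?_⟩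
  rw [map_mul, map_mul, ← h, ← h']
  ring

theorem pow (hf : IsPositiveFraction f) (k : ℕ) : IsPositiveFraction (f ^ k) := by
  induction k with
  | zero => simpa using one
  | succ k ih => simpa [pow_succ] using ih.mul hf

theorem prod {ι : Type*} {s : Finset ι} {f : ι → FractionRing (MvPolynomial σ ℚ)}
    (hf : ∀ i ∈ s, IsPositiveFraction (f i)) : IsPositiveFraction (∏ i ∈ s, f i) :=
  Finset.prod_induction f IsPositiveFraction (fun _ _ => mul) one hf

end IsPositiveFraction

/-- Frieze sequences of an acyclic quiver consist of positive fractions. -/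
theorem isPositiveFraction_frieze {V : Type*} [Fintype V] {mult : V → V → ℕ} {ρ : V → ℕ}
    (hρ : ∀ u v, mult u v ≠ 0 → ρ u < ρ v) {X : V → ℕ → FractionRing (MvPolynomial V ℚ)}
    (hX0 : ∀ v, X v 0 = algebraMap (MvPolynomial V ℚ) _ (MvPolynomial.X v))
    (hX : ∀ v (j : ℕ), X v (j + 1) * X v j =
      1 + (∏ s, X s (j + 1) ^ mult s v) * (∏ d, X d j ^ mult v d)) (j : ℕ) :
    ∀ v, IsPositiveFraction (X v j) := by
  induction j with
  | zero => exact fun v => hX0 v ▸ IsPositiveFraction.of_X v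
  | succ j ih =>
    intro v
    induction hr : ρ v using Nat.strong_induction_on generalizing v with
    | _ r ihr =>
      refine IsPositiveFraction.of_mul (g := X v j) ?_ (ih v)
      rw [hX]
      refine (IsPositiveFraction.mul (IsPositiveFraction.prod fun s _ => ?_)
        (IsPositiveFraction.prod fun d _ => (ih d).pow _)).one_add
      by_cases h : mult s v = 0
      · simpa [h] using IsPositiveFraction.one
      · exact (ihr _ (hr ▸ hρ s v h) s rfl).pow _

end Positivity

/-- Let `n ≥ 4` and let `Q` be any orientation of D̃_n, encoded by the arrow
multiplicity function `mult` : for each edge `{u,v}` there is exactly one arrow between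
`u` and `v` (in one of the two directions), and there are no other arrows. Then every
frieze sequence `(X^i_j)_j` in `ℚ(x_0,…,x_n)` satisfies a linear recurrence. -/
theorem stmt_1 (n : ℕ) (hn : 4 ≤ n)
    (mult : Fin (n+1) → Fin (n+1) → ℕ)   -- number of arrows from `u` to `v`
    (hedge : ∀ u v : Fin (n+1), dTildeEdge n u.val v.val → mult u v + mult v u = 1)
    (hnonedge : ∀ u v : Fin (n+1),
      ¬ dTildeEdge n u.val v.val → ¬ dTildeEdge n v.val u.val → mult u v = 0)
    -- the frieze sequences
    (X : Fin (n+1) → ℕ → FractionRing (MvPolynomial (Fin (n+1)) ℚ))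
    (hX0 : ∀ v, X v 0 = algebraMap (MvPolynomial (Fin (n+1)) ℚ)
      (FractionRing (MvPolynomial (Fin (n+1)) ℚ)) (MvPolynomial.X v))
    (hXrec : ∀ v (j : ℕ), X v (j+1) * X v j =
      1 + (∏ s : Fin (n+1), X s (j+1) ^ mult s v) * (∏ d : Fin (n+1), X d j ^ mult v d)) :
    -- every frieze sequence satisfies a linear recurrence
    ∀ i : Fin (n+1), ∃ s : ℕ, 1 ≤ s ∧
      ∃ coeff : Fin s → FractionRing (MvPolynomial (Fin (n+1)) ℚ),
        ∀ j : ℕ, X i (j + s) = ∑ t : Fin s, coeff t * X i (j + t.val) := by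
  classical
  obtain ⟨g, lin, hg⟩ := exists_offset n hn mult hedge
  have hpos := isPositiveFraction_frieze
    (ρ := fun v => lin v + 2 * (∑ w, g w - g v)) (mult := mult) (fun u v huv => by
      have hu : g u ≤ ∑ w, g w := Finset.single_le_sum (fun _ _ => Nat.zero_le _)
        (Finset.mem_univ u)
      have hv : g v ≤ ∑ w, g w := Finset.single_le_sum (fun _ _ => Nat.zero_le _)
        (Finset.mem_univ v)
      by_cases h : dTildeEdge n u.val v.val
      · have := hg _ _ h
        have := hedge _ _ h
        omega
      · by_cases h' : dTildeEdge n v.val u.val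
        · have := hg _ _ h'
          have := hedge _ _ h'
          omega
        · exact absurd (hnonedge _ _ h h') huv) hX0 hXrec
  set y : ℕ → ℕ → FractionRing (MvPolynomial (Fin (n + 1)) ℚ) := fun i j =>
    if h : i < n + 1 then X ⟨i, h⟩ (j + g ⟨i, h⟩) else 1 with hy
  have hyv : ∀ (v : Fin (n + 1)) j, y v.val j = X v (j + g v) := fun v j => by
    simp only [hy]
    rw [dif_pos v.is_lt]
  have key := isRecurrent_linear hn (y := y)
    (fun i j hi => by
      rw [hyv ⟨i, by omega⟩]
      exact (hpos _ _).ne_zero)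
    (fun i j hi => by
      rw [hyv ⟨i, by omega⟩, hyv ⟨i, by omega⟩,
        linear_relation hedge hnonedge hXrec hg]
      simp only [Finset.prod_filter, Finset.prod_range, hyv])
  intro i
  have hi := key i.val (by omega)
  rw [show y i.val = fun j => X i (j + g i) from funext (hyv i)] at hi
  exact hi.of_comp_add.exists_coeff
end

section
/- Let Q be the quiver of type Ẽ_8 with vertex set {1,…,9} and arrows 1→2, 2→3, 3→4, 4→5, 5→9, 6→9, 7→8, 8→9. Let δ = α_1 + 2α_2 + 3α_3 + 4α_4 + 5α_5 + 3α_6 + 2α_7 + 4α_8 + 6α_9 ∈ ℤ^9 and let c be the Coxeter transformation of Q. Then c^{30}(x) = x − ⟨x,δ⟩δ for all x ∈ ℤ^9; moreover 30 is the least positive integer b such that c^b(x) − x ∈ ℤδ for every x ∈ ℤ^9. -/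
/-- The Euler form of the quiver on `Fin N` whose number of arrows from `s` to `t` is
`mult s t` : `⟨a,b⟩ = ∑_v a_v * b_v − ∑_{arrows s→t} a_t * b_s`. -/
def eulerForm (N : ℕ) (mult : Fin N → Fin N → ℕ) (a b : Fin N → ℤ) : ℤ :=
  (∑ v, a v * b v) - ∑ s, ∑ t, (mult s t : ℤ) * (a t * b s)

/-- Arrow multiplicities of the quiver of type Ẽ_8 with arrows
`1→2, 2→3, 3→4, 4→5, 5→9, 6→9, 7→8, 8→9`; here the vertex labelled `k ∈ {1,…,9}`
corresponds to the index `k−1` of `Fin 9`. -/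
def multE8 (s t : Fin 9) : ℕ :=
  if (s = 0 ∧ t = 1) ∨ (s = 1 ∧ t = 2) ∨ (s = 2 ∧ t = 3) ∨ (s = 3 ∧ t = 4) ∨
     (s = 4 ∧ t = 8) ∨ (s = 5 ∧ t = 8) ∨ (s = 6 ∧ t = 7) ∨ (s = 7 ∧ t = 8) then 1 else 0

/-- The radical vector `δ = α₁ + 2α₂ + 3α₃ + 4α₄ + 5α₅ + 3α₆ + 2α₇ + 4α₈ + 6α₉` of Ẽ_8
(vertex `k` corresponds to index `k−1`). -/
def deltaE8 : Fin 9 → ℤ := ![1, 2, 3, 4, 5, 3, 2, 4, 6]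

theorem eulerForm_multE8 (a b : Fin 9 → ℤ) :
    eulerForm 9 multE8 a b = a 0 * b 0 + a 1 * b 1 + a 2 * b 2 + a 3 * b 3 + a 4 * b 4 +
      a 5 * b 5 + a 6 * b 6 + a 7 * b 7 + a 8 * b 8 -
      (a 1 * b 0 + a 2 * b 1 + a 3 * b 2 + a 4 * b 3 + a 8 * b 4 + a 8 * b 5 + a 7 * b 6 +
        a 8 * b 7) := by
  have h : ∀ f : Fin 9 → ℤ,
      ∑ i, f i = f 0 + f 1 + f 2 + f 3 + f 4 + f 5 + f 6 + f 7 + f 8 := fun f => by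
    rw [Fin.sum_univ_castSucc, Fin.sum_univ_eight]
    rfl
  simp [eulerForm, multE8, h]

/-- The Coxeter transformation of the quiver `multE8` in coordinates. -/
theorem coxeterE8_apply (c : (Fin 9 → ℤ) ≃ₗ[ℤ] (Fin 9 → ℤ))
    (hc : ∀ x y : Fin 9 → ℤ, eulerForm 9 multE8 x y = - eulerForm 9 multE8 y (c x))
    (x : Fin 9 → ℤ) :
    c x = ![-x 0 + x 1,
      -x 0 + x 2,
      -x 0 + x 3,
      -x 0 + x 4,
      -x 0 + x 8,
      -x 5 + x 8,
      -x 6 + x 7,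
      -x 6 + x 8,
      -x 0 - x 5 - x 6 + 2 * x 8] := by
  have h := fun i => hc x (Pi.single i 1)
  have h0 := h 0
  have h1 := h 1
  have h2 := h 2
  have h3 := h 3
  have h4 := h 4
  have h5 := h 5
  have h6 := h 6
  have h7 := h 7
  have h8 := h 8
  simp [eulerForm_multE8] at h0 h1 h2 h3 h4 h5 h6 h7 h8
  ext i
  fin_cases i <;> simp <;> linarith

theorem coxeterE8_iterate_five {c : (Fin 9 → ℤ) → (Fin 9 → ℤ)}
    (hc : ∀ x, c x = ![-x 0 + x 1,
      -x 0 + x 2,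
      -x 0 + x 3,
      -x 0 + x 4,
      -x 0 + x 8,
      -x 5 + x 8,
      -x 6 + x 7,
      -x 6 + x 8,
      -x 0 - x 5 - x 6 + 2 * x 8])
    (x : Fin 9 → ℤ) :
    c^[5] x = ![-x 4 + x 8,
      -x 4 - x 5 - x 6 + 2 * x 8,
      -x 0 - x 4 - x 5 - x 6 - x 7 + 3 * x 8,
      -x 0 - x 1 - x 4 - 2 * x 5 - x 6 - x 7 + 4 * x 8,
      -x 0 - x 1 - x 2 - x 4 - 2 * x 5 - 2 * x 6 - x 7 + 5 * x 8,
      -x 1 - x 3 - x 5 - x 6 - x 7 + 3 * x 8,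
      -x 2 - x 5 - x 7 + 2 * x 8,
      -x 0 - x 2 - x 3 - 2 * x 5 - x 6 - x 7 + 4 * x 8,
      -x 0 - x 1 - x 2 - x 3 - x 4 - 3 * x 5 - 2 * x 6 - 2 * x 7 + 7 * x 8] := by
  ext i
  fin_cases i <;> simp [hc] <;> ring

theorem coxeterE8_iterate_fifteen {c : (Fin 9 → ℤ) → (Fin 9 → ℤ)}
    (hc : ∀ x, c x = ![-x 0 + x 1,
      -x 0 + x 2,
      -x 0 + x 3,
      -x 0 + x 4,
      -x 0 + x 8,
      -x 5 + x 8,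
      -x 6 + x 7,
      -x 6 + x 8,
      -x 0 - x 5 - x 6 + 2 * x 8])
    (x : Fin 9 → ℤ) :
    c^[15] x = ![-x 2 - x 4 - x 5 - x 6 - x 7 + 3 * x 8,
      -x 0 - x 2 - x 3 - x 4 - 3 * x 5 - 2 * x 6 - 2 * x 7 + 6 * x 8,
      -2 * x 0 - x 1 - x 2 - x 3 - 2 * x 4 - 4 * x 5 - 3 * x 6 - 3 * x 7 + 9 * x 8,
      -2 * x 0 - 2 * x 1 - 2 * x 2 - x 3 - 2 * x 4 - 6 * x 5 - 4 * x 6 - 4 * x 7 + 12 * x 8,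
      -3 * x 0 - 2 * x 1 - 3 * x 2 - 2 * x 3 - 2 * x 4 - 7 * x 5 - 5 * x 6 - 5 * x 7 + 15 * x 8,
      -x 0 - 2 * x 1 - x 2 - 2 * x 3 - x 4 - 4 * x 5 - 3 * x 6 - 3 * x 7 + 9 * x 8,
      -x 0 - x 1 - x 2 - x 3 - x 4 - 3 * x 5 - x 6 - 2 * x 7 + 6 * x 8,
      -2 * x 0 - 2 * x 1 - 2 * x 2 - 2 * x 3 - 2 * x 4 - 6 * x 5 - 4 * x 6 - 3 * x 7 + 12 * x 8,
      -3 * x 0 - 3 * x 1 - 3 * x 2 - 3 * x 3 - 3 * x 4 - 9 * x 5 - 6 * x 6 - 6 * x 7 + 19 * x 8] := by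
  have h : c^[15] x = c^[5] (c^[5] (c^[5] x)) := by
    simp only [← Function.iterate_add_apply]
  rw [h]
  ext i
  fin_cases i <;> simp [coxeterE8_iterate_five hc] <;> ring

/-- for the Coxeter transformation `c` of the above quiver of type Ẽ_8
(the unique automorphism with `⟨x,y⟩ = −⟨y,c x⟩`), one has `c^30 x = x − ⟨x,δ⟩δ` for all
`x ∈ ℤ^9`, and `30` is the least positive `b` with `c^b x − x ∈ ℤδ` for all `x`. -/
theorem stmt_9 (c : (Fin 9 → ℤ) ≃ₗ[ℤ] (Fin 9 → ℤ))
    (hc : ∀ x y : Fin 9 → ℤ, eulerForm 9 multE8 x y = - eulerForm 9 multE8 y (c x)) :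
    (∀ x : Fin 9 → ℤ, (⇑c)^[30] x = x - eulerForm 9 multE8 x deltaE8 • deltaE8) ∧
    IsLeast {b : ℕ | 0 < b ∧ ∀ x : Fin 9 → ℤ,
      ∃ t : ℤ, (⇑c)^[b] x - x = t • deltaE8} 30 := by
  have hf := coxeterE8_apply c hc
  have h30 : ∀ x : Fin 9 → ℤ,
      (⇑c)^[30] x = x - eulerForm 9 multE8 x deltaE8 • deltaE8 := by
    intro x
    rw [show 30 = 15 + 15 from rfl, Function.iterate_add_apply]
    ext i
    fin_cases i <;>
      simp [coxeterE8_iterate_fifteen hf, eulerForm_multE8, deltaE8] <;> ring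
  refine ⟨h30, ⟨by norm_num, fun x => ⟨-eulerForm 9 multE8 x deltaE8, by rw [h30]; module⟩⟩, ?_⟩
  rintro b ⟨hb, h⟩
  by_contra! hlt
  obtain ⟨t, ht⟩ := h ![1, 0, 0, 0, 0, 0, 0, 0, 0]
  have hi := fun i => congrFun ht i
  simp only [Fin.forall_fin_succ] at hi
  interval_cases b <;> simp [hf, deltaE8] at hi <;> omega
end
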